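/- arXiv:1311.1488 — 2 statements merged into one kernel-verified Lean document; each statement's English description precedes it below -/
import Mathlib

section
/- Fix an integer ℓ ≥ 1 and define R'(n) = 0 for integers n ≤ 0 and, inductively, R'(n+1) = max( R'(n), sup_{t ∈ [0, 1/ℓ)} ( R'(n−ℓ) + ξ_{(n+1)/ℓ − t} ) ). Then for every integer n ≥ 0, R'(n) ≤ R_ξ(n/ℓ). -/
open MeasureTheory Real Filter Set

noncomputable section

/-- Auxiliary construction of the stairs functional: `stairsAux ξ n` agrees with `R_ξ` on
`(-∞, n]`; on `(n-1, n]` it is given by the defining recursion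
`R_ξ(t) = sup_{s ∈ [0,1]} (R_ξ(t−s−1) + ξ(t−s))`. -/
def stairsAux (ξ : ℝ → ℝ) : ℕ → ℝ → ℝ
  | 0, _ => 0
  | n + 1, t =>
    if t ≤ n then stairsAux ξ n t
    else ⨆ s : Set.Icc (0 : ℝ) 1, (stairsAux ξ n (t - (s : ℝ) - 1) + ξ (t - (s : ℝ)))

/-- The stairs functional `R_ξ`: `R_ξ(t) = 0` for `t ≤ 0` and, inductively for `t ∈ (n, n+1]`,
`R_ξ(t) = sup_{s ∈ [0,1]} (R_ξ(t−s−1) + ξ(t−s))`. -/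
def stairs (ξ : ℝ → ℝ) (t : ℝ) : ℝ :=
  stairsAux ξ ⌈t⌉₊ t

/-- The discretised process `R'` of Statement 13: `R'(n) = 0` for `n ≤ 0` and
`R'(n+1) = max(R'(n), sup_{t ∈ [0,1/ℓ)} (R'(n−ℓ) + ξ((n+1)/ℓ − t)))`
(with truncated subtraction realising the convention `R'(k) = 0` for `k ≤ 0`). -/
def dspCont (ℓ : ℕ) (ξ : ℝ → ℝ) : ℕ → ℝ
  | 0 => 0
  | n + 1 =>
    max (dspCont ℓ ξ n)
      (⨆ t : Set.Ico (0 : ℝ) (1 / ℓ),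
        (dspCont ℓ ξ (n - ℓ) + ξ (((n : ℝ) + 1) / ℓ - (t : ℝ))))

/-!
The key inequality is `R(u - 1) + ξ u ≤ R(t)` whenever `0 < u ≤ t`. For `t - 1 ≤ u` it is one term
of the supremum defining `R(t)`, which has to be shown to be a supremum of a bounded set. The
general case reduces to this one by removing the integer part of `t - u`, since the term `s = 0`
gives `R(t - 1) ≤ R(t)`. Each term of the recursion for `R'(n + 1)` is of the form
`R'(n - ℓ) + ξ u` with `n / ℓ < u ≤ (n + 1) / ℓ`, so comparing `R'(n)` with `R(t)` for all
`t ≥ n / ℓ` at once closes the induction.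
-/

theorem bddAbove_image_of_finite_setOf_le {α β : Type*} [LinearOrder β] {f : α → β} {s : Set α}
    {a : β} (hfin : {x | x ∈ s ∧ a ≤ f x}.Finite) : BddAbove (f '' s) := by
  have : Nonempty β := ⟨a⟩
  refine ((hfin.image f).bddAbove.union (bddAbove_Iic (a := a))).mono ?_
  rintro _ ⟨x, hx, rfl⟩
  exact (le_total a (f x)).imp (fun h => mem_image_of_mem f ⟨hx, h⟩) id

section Recursion

variable (ξ : ℝ → ℝ)

theorem stairsAux_add_of_le {m : ℕ} {t : ℝ} (ht : t ≤ m) (k : ℕ) :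
    stairsAux ξ (m + k) t = stairsAux ξ m t := by
  induction k with
  | zero => rfl
  | succ k ih =>
    have htk : t ≤ (m + k : ℕ) := ht.trans (mod_cast m.le_add_right k)
    rw [← add_assoc, stairsAux, if_pos htk, ih]

theorem stairsAux_eq_stairs {n : ℕ} {t : ℝ} (ht : t ≤ n) : stairsAux ξ n t = stairs ξ t := by
  obtain ⟨k, rfl⟩ := Nat.exists_eq_add_of_le (Nat.ceil_le.2 ht)
  exact stairsAux_add_of_le ξ (Nat.le_ceil t) k

theorem stairs_of_nonpos {t : ℝ} (ht : t ≤ 0) : stairs ξ t = 0 := by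
  rw [stairs, Nat.ceil_eq_zero.2 ht, stairsAux]

theorem stairs_of_pos {t : ℝ} (ht : 0 < t) :
    stairs ξ t = ⨆ s : Icc (0 : ℝ) 1, (stairs ξ (t - s - 1) + ξ (t - s)) := by
  obtain ⟨n, hn⟩ := Nat.exists_eq_succ_of_ne_zero (Nat.ceil_pos.2 ht).ne'
  have h_gt : ¬ t ≤ n := (Nat.lt_ceil.1 (by omega)).not_ge
  have h_le : t ≤ n + 1 := mod_cast Nat.ceil_le.1 hn.le
  rw [stairs, hn, stairsAux, if_neg h_gt]
  refine iSup_congr fun s => ?_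
  rw [stairsAux_eq_stairs ξ (by linarith [s.2.1])]

end Recursion

variable {ξ : ℝ → ℝ}

theorem bddAbove_stairs_image_Iic (hξbdd : ∀ b c, BddAbove (ξ '' Icc b c)) (n : ℕ) :
    BddAbove (stairs ξ '' Iic (n : ℝ)) := by
  induction n with
  | zero =>
    refine ⟨0, forall_mem_image.2 fun t ht => ?_⟩
    exact (stairs_of_nonpos ξ (mod_cast ht)).le
  | succ n ih =>
    obtain ⟨B, hB⟩ := ih
    obtain ⟨M, hM⟩ := hξbdd (-1) (n + 1)
    rw [mem_upperBounds, forall_mem_image] at hB hM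
    refine ⟨max B (B + M), forall_mem_image.2 fun t ht => ?_⟩
    rw [mem_Iic, Nat.cast_succ] at ht
    rcases le_or_gt t n with htn | htn
    · exact le_max_of_le_left (hB htn)
    · have ht0 : 0 < t := n.cast_nonneg.trans_lt htn
      rw [stairs_of_pos ξ ht0]
      refine ciSup_le fun ⟨s, hs0, hs1⟩ => le_max_of_le_right ?_
      exact add_le_add (hB (mem_Iic.2 (by linarith))) (hM ⟨by linarith, by linarith⟩)

theorem bddAbove_range_stairs_add (hξbdd : ∀ b c, BddAbove (ξ '' Icc b c)) (t : ℝ) :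
    BddAbove (range fun s : Icc (0 : ℝ) 1 => stairs ξ (t - s - 1) + ξ (t - s)) := by
  obtain ⟨B, hB⟩ := bddAbove_stairs_image_Iic hξbdd ⌈t⌉₊
  obtain ⟨M, hM⟩ := hξbdd (t - 1) t
  rw [mem_upperBounds, forall_mem_image] at hB hM
  refine ⟨B + M, forall_mem_range.2 fun ⟨s, hs0, hs1⟩ => ?_⟩
  exact add_le_add (hB (mem_Iic.2 (by linarith [Nat.le_ceil t])))
    (hM ⟨by linarith, by linarith⟩)

theorem stairs_sub_one_add_le_of_sub_one_le (hξbdd : ∀ b c, BddAbove (ξ '' Icc b c)) {u t : ℝ}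
    (ht : 0 < t) (htu : t - 1 ≤ u) (hut : u ≤ t) : stairs ξ (u - 1) + ξ u ≤ stairs ξ t := by
  have h_term := le_ciSup (bddAbove_range_stairs_add hξbdd t) ⟨t - u, by linarith, by linarith⟩
  rw [stairs_of_pos ξ ht]
  simpa only [sub_sub_cancel] using h_term

theorem stairsAux_nonneg (hξ0 : ∀ t, 0 ≤ ξ t) (n : ℕ) (t : ℝ) : 0 ≤ stairsAux ξ n t := by
  induction n generalizing t with
  | zero => exact le_rfl
  | succ n ih =>
    rw [stairsAux]
    split_ifs
    · exact ih t
    · exact Real.iSup_nonneg fun s => add_nonneg (ih _) (hξ0 _)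

theorem stairs_nonneg (hξ0 : ∀ t, 0 ≤ ξ t) (t : ℝ) : 0 ≤ stairs ξ t :=
  stairsAux_nonneg hξ0 _ _

theorem stairs_sub_one_le (hξ0 : ∀ t, 0 ≤ ξ t) (hξbdd : ∀ b c, BddAbove (ξ '' Icc b c)) (t : ℝ) :
    stairs ξ (t - 1) ≤ stairs ξ t := by
  rcases le_or_gt t 0 with ht | ht
  · rw [stairs_of_nonpos ξ (by linarith), stairs_of_nonpos ξ ht]
  · have h_term := stairs_sub_one_add_le_of_sub_one_le hξbdd ht (sub_le_self t zero_le_one) le_rfl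
    exact (le_add_of_nonneg_right (hξ0 t)).trans h_term

theorem stairs_sub_natCast_le (hξ0 : ∀ t, 0 ≤ ξ t) (hξbdd : ∀ b c, BddAbove (ξ '' Icc b c))
    (t : ℝ) (k : ℕ) : stairs ξ (t - k) ≤ stairs ξ t := by
  induction k with
  | zero => rw [Nat.cast_zero, sub_zero]
  | succ k ih =>
    rw [Nat.cast_succ, ← sub_sub]
    exact (stairs_sub_one_le hξ0 hξbdd (t - k)).trans ih

theorem stairs_sub_one_add_le (hξ0 : ∀ t, 0 ≤ ξ t) (hξbdd : ∀ b c, BddAbove (ξ '' Icc b c))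
    {u t : ℝ} (hu : 0 < u) (hut : u ≤ t) : stairs ξ (u - 1) + ξ u ≤ stairs ξ t := by
  set k := ⌊t - u⌋₊
  have hk_le : (k : ℝ) ≤ t - u := Nat.floor_le (sub_nonneg.2 hut)
  have hk_lt : t - u < k + 1 := Nat.lt_floor_add_one _
  calc stairs ξ (u - 1) + ξ u ≤ stairs ξ (t - k) :=
        stairs_sub_one_add_le_of_sub_one_le hξbdd (by linarith) (by linarith) (by linarith)
    _ ≤ stairs ξ t := stairs_sub_natCast_le hξ0 hξbdd t k

theorem stmt_13_general (hξ0 : ∀ t, 0 ≤ ξ t) (hξbdd : ∀ b c, BddAbove (ξ '' Icc b c))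
    {ℓ : ℕ} (hℓ : 1 ≤ ℓ) (n : ℕ) {t : ℝ} (ht : (n : ℝ) / ℓ ≤ t) :
    dspCont ℓ ξ n ≤ stairs ξ t := by
  have hℓ_pos : (0 : ℝ) < ℓ := Nat.cast_pos.2 hℓ
  induction n using Nat.strong_induction_on generalizing t with
  | _ n ih =>
  cases n with
  | zero =>
    rw [dspCont]
    exact stairs_nonneg hξ0 t
  | succ n =>
    have h_split : ((n : ℝ) + 1) / ℓ = n / ℓ + 1 / ℓ := add_div _ _ _
    have h_step : (0 : ℝ) < 1 / ℓ := one_div_pos.2 hℓ_pos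
    have hn_nonneg : (0 : ℝ) ≤ n / ℓ := by positivity
    rw [Nat.cast_succ] at ht
    rw [dspCont]
    refine max_le (ih n n.lt_succ_self (by linarith)) ?_
    have : Nonempty (Ico (0 : ℝ) (1 / ℓ)) := ⟨⟨0, le_rfl, h_step⟩⟩
    refine ciSup_le fun ⟨r, hr0, hr1⟩ => ?_
    set u := ((n : ℝ) + 1) / ℓ - r with hu
    have hu_gt : n / ℓ < u := by linarith only [hu, h_split, hr1]
    have h_delayed : dspCont ℓ ξ (n - ℓ) ≤ stairs ξ (u - 1) := by
      rcases le_total ℓ n with h | h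
      · refine ih (n - ℓ) (by omega) ?_
        rw [Nat.cast_sub h, sub_div, div_self hℓ_pos.ne']
        exact sub_le_sub_right hu_gt.le 1
      · rw [Nat.sub_eq_zero_of_le h, dspCont]
        exact stairs_nonneg hξ0 _
    calc dspCont ℓ ξ (n - ℓ) + ξ u ≤ stairs ξ (u - 1) + ξ u := by gcongr
      _ ≤ stairs ξ t :=
        stairs_sub_one_add_le hξ0 hξbdd (hn_nonneg.trans_lt hu_gt) ((sub_le_self _ hr0).trans ht)

/-- for `ℓ ≥ 1`, the discretised process is dominated by the stairs
functional: `R'(n) ≤ R_ξ(n/ℓ)` for every `n ≥ 0`. -/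
theorem stmt_13 (ξ : ℝ → ℝ) (hξ0 : ∀ t, 0 ≤ ξ t) (hξneg : ∀ t ≤ (0 : ℝ), ξ t = 0)
    (hξfin : ∀ a : ℝ, 0 < a → ∀ b c : ℝ, {t | t ∈ Set.Icc b c ∧ a ≤ ξ t}.Finite)
    (ℓ : ℕ) (hℓ : 1 ≤ ℓ) (n : ℕ) :
    dspCont ℓ ξ n ≤ stairs ξ ((n : ℝ) / ℓ) :=
  stmt_13_general hξ0 (fun b c => bddAbove_image_of_finite_setOf_le (hξfin 1 one_pos b c)) hℓ n
    le_rfl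

end
end

section
/- Assume α = 1 and E[X] = ∞. Set b^N_n = ∫₁^{h⁻¹(n)} h(c_N)/h(c_N x) dx. Then for i ∈ {1, N}, lim_{N→∞} limsup_{n→∞} d( L( (log₂ N / c_N) · X_i(n) / (n b^N_n) ), δ_1 ) = 0, where d is the Lévy–Prokhorov distance on probability measures on ℝ, L(·) denotes the law of a random variable, and δ_1 is the Dirac mass at 1. -/
open MeasureTheory ProbabilityTheory Real Filter Set

noncomputable section

/-- One step of the `N`-BRW: each of the `N` particles branches into two, the children jump
according to `jump`, and only the `N` right-most particles are kept; the result is the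
sorted (ascending) vector of the `N` retained positions. -/
def brwStep (N : ℕ) (pos : Fin N → ℝ) (jump : Fin N → Fin 2 → ℝ) : Fin N → ℝ := fun i =>
  (((Finset.univ : Finset (Fin N × Fin 2)).val.map fun p => pos p.1 + jump p.1 p.2).sort
      (· ≤ ·)).getD (N + i) 0

/-- The `N`-BRW started from the sorted configuration `x0`, driven by the jumps `jump`:
`brw N x0 jump n i` is the position `X_{i+1}(n)` of the `(i+1)`-th lowest particle at time `n`. -/
def brw (N : ℕ) (x0 : Fin N → ℝ) (jump : ℕ → Fin N → Fin 2 → ℝ) : ℕ → Fin N → ℝ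
  | 0 => x0
  | n + 1 => brwStep N (brw N x0 jump n) (jump n)

/-- Position `X_N(n)` of the right-most particle of the `N`-BRW started at the origin. -/
def brwMax (N : ℕ) (jump : ℕ → Fin N → Fin 2 → ℝ) (n : ℕ) : ℝ :=
  ⨆ i, brw N (fun _ => 0) jump n i

/-- Position `X_1(n)` of the left-most particle of the `N`-BRW started at the origin. -/
def brwMin (N : ℕ) (jump : ℕ → Fin N → Fin 2 → ℝ) (n : ℕ) : ℝ :=
  ⨅ i, brw N (fun _ => 0) jump n i

/-- The tail `P(X > x) = 1/h(x)` of the random variable `X` under `P`. -/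
def tail {Ω : Type*} [MeasurableSpace Ω] (P : Measure Ω) (X : Ω → ℝ) (x : ℝ) : ℝ :=
  (P {ω | x < X ω}).toReal

/-- Generalized inverse `h⁻¹(y)` of `h(x) = 1 / P(X > x)`. -/
def hinv {Ω : Type*} [MeasurableSpace Ω] (P : Measure Ω) (X : Ω → ℝ) (y : ℝ) : ℝ :=
  sInf {x : ℝ | 0 ≤ x ∧ tail P X x ≤ y⁻¹}

/-- The scaling sequence `c_N = h⁻¹(2 N log₂ N)`. -/
def cN {Ω : Type*} [MeasurableSpace Ω] (P : Measure Ω) (X : Ω → ℝ) (N : ℕ) : ℝ :=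
  hinv P X (2 * N * Real.logb 2 N)

/-- `b^N_n = ∫₁^{h⁻¹(n)} h(c_N)/h(c_N x) dx` (here `h(c_N)/h(c_N x) = P(X > c_N x)/P(X > c_N)`). -/
def bN {Ω : Type*} [MeasurableSpace Ω] (P : Measure Ω) (X : Ω → ℝ) (N : ℕ) (n : ℕ) : ℝ :=
  ∫ x in (1 : ℝ)..(hinv P X n), tail P X (cN P X N * x) / tail P X (cN P X N)

/-!
Fix `N` and write `m(T) = E[min X T]` and `a_n = h⁻¹(n)`. Since `α = 1` and `E[X] = ∞`, the function
`m` tends to infinity and is slowly varying, hence sums of `κ n` pairwise independent copies of `X`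
are relatively stable: divided by `n m(a_n)`, they converge to `κ` in probability, with or without
truncation at level `a_n`.

Every particle lies below the sum of all `2 N n` jumps. Conversely, cut time into periods of `A + l`
generations with `N ≤ 2 ^ l`. The particle that makes the largest jump of the first `A` generations
has at least `N` descendants `l` generations later, so the minimum grows in each period by at least
that largest jump, whose tail is asymptotic to `2 N A P(X > x)`. Letting `A → ∞`, any quantity `R_n`
between the minimum and the maximum satisfies `R_n / (n m(a_n)) → 2 N` in probability.

As `b^N_n ~ m(a_n) / (c_N P(X > c_N))`, the rescaled law converges to the Dirac mass at
`2 N log₂ N P(X > c_N)`, which tends to `1` as `N → ∞` by the choice of `c_N`.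
-/

section IntegralAsymptotics

open Asymptotics

variable {f g : ℝ → ℝ} {a c : ℝ}

lemma isLittleO_intervalIntegral_atTop (hf : ∀ b, IntervalIntegrable f volume a b)
    (hg : ∀ b, IntervalIntegrable g volume a b) (hg_nonneg : ∀ᶠ x in atTop, 0 ≤ g x)
    (hfg : f =o[atTop] g) (hG : Tendsto (fun T => ∫ x in a..T, g x) atTop atTop) :
    (fun T => ∫ x in a..T, f x) =o[atTop] fun T => ∫ x in a..T, g x := by
  refine isLittleO_iff.2 fun ε hε => ?_
  obtain ⟨x₀, hx₀⟩ := eventually_atTop.1 ((isLittleO_iff.1 hfg (half_pos hε)).and hg_nonneg)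
  set F₀ := ∫ x in a..x₀, f x
  set G₀ := ∫ x in a..x₀, g x
  filter_upwards [eventually_ge_atTop x₀, hG.eventually_ge_atTop 0,
    hG.eventually_ge_atTop (2 / ε * (|F₀| - ε / 2 * G₀))] with T hT hGT_nonneg hGT
  have tail_le : |∫ x in x₀..T, f x| ≤ ε / 2 * ∫ x in x₀..T, g x := by
    rw [← intervalIntegral.integral_const_mul, ← Real.norm_eq_abs]
    refine intervalIntegral.norm_integral_le_of_norm_le hT (ae_of_all _ fun x hx => ?_)
      (((hg x₀).symm.trans (hg T)).const_mul _)
    obtain ⟨hfx, hgx⟩ := hx₀ x hx.1.le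
    rwa [Real.norm_of_nonneg hgx] at hfx
  have split_f := intervalIntegral.integral_add_adjacent_intervals (hf x₀)
    ((hf x₀).symm.trans (hf T))
  have split_g := intervalIntegral.integral_add_adjacent_intervals (hg x₀)
    ((hg x₀).symm.trans (hg T))
  have head_le : |F₀| - ε / 2 * G₀ ≤ ε / 2 * ∫ x in a..T, g x := by
    calc |F₀| - ε / 2 * G₀ = ε / 2 * (2 / ε * (|F₀| - ε / 2 * G₀)) := by field_simp
      _ ≤ _ := by gcongr
  rw [Real.norm_eq_abs, Real.norm_of_nonneg hGT_nonneg]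
  calc |∫ x in a..T, f x| ≤ |F₀| + |∫ x in x₀..T, f x| := split_f ▸ abs_add_le _ _
    _ ≤ ε * ∫ x in a..T, g x := by linear_combination tail_le + head_le + ε / 2 * split_g

lemma tendsto_intervalIntegral_div_intervalIntegral (hf : ∀ b, IntervalIntegrable f volume a b)
    (hg : ∀ b, IntervalIntegrable g volume a b) (hg_pos : ∀ᶠ x in atTop, 0 < g x)
    (hfg : Tendsto (fun x => f x / g x) atTop (nhds c))
    (hG : Tendsto (fun T => ∫ x in a..T, g x) atTop atTop) :
    Tendsto (fun T => (∫ x in a..T, f x) / ∫ x in a..T, g x) atTop (nhds c) := by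
  have hsub : (fun x => f x - c * g x) =o[atTop] g := by
    refine (isLittleO_iff_tendsto' (hg_pos.mono fun x hx h0 => absurd h0 hx.ne')).2 ?_
    refine (sub_self c ▸ hfg.sub_const c).congr' (hg_pos.mono fun x hx => ?_)
    field_simp
  have hint := isLittleO_intervalIntegral_atTop (fun b => (hf b).sub ((hg b).const_mul c)) hg
    (hg_pos.mono fun _ => le_of_lt) hsub hG
  refine (zero_add c ▸ hint.tendsto_div_nhds_zero.add_const c).congr'
    ((hG.eventually_gt_atTop 0).mono fun T hT => ?_)
  rw [intervalIntegral.integral_sub (hf T) ((hg T).const_mul c),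
    intervalIntegral.integral_const_mul]
  field_simp
  ring

end IntegralAsymptotics

section Tail

variable {Ω : Type*} [MeasurableSpace Ω] {P : Measure Ω} {X Y : Ω → ℝ}

lemma tail_nonneg (x : ℝ) : 0 ≤ tail P X x := ENNReal.toReal_nonneg

lemma tail_congr_of_map_eq (hX : Measurable X) (hY : Measurable Y) (h : P.map Y = P.map X) :
    tail P Y = tail P X := by
  funext x
  have hx : P (Y ⁻¹' Ioi x) = P (X ⁻¹' Ioi x) := by
    rw [← Measure.map_apply hY measurableSet_Ioi, h, Measure.map_apply hX measurableSet_Ioi]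
  exact congrArg ENNReal.toReal hx

variable [IsFiniteMeasure P]

lemma antitone_tail : Antitone (tail P X) := fun _ _ hab =>
  measureReal_mono (μ := P) fun _ h => hab.trans_lt h

lemma intervalIntegrable_tail (a b : ℝ) : IntervalIntegrable (tail P X) volume a b :=
  antitone_tail.intervalIntegrable

lemma tendsto_tail_atTop (hX : Measurable X) : Tendsto (tail P X) atTop (nhds 0) := by
  have hlim := tendsto_measure_iInter_atTop (μ := P) (s := fun x : ℝ => X ⁻¹' Ioi x)
    (fun x => (hX measurableSet_Ioi).nullMeasurableSet)
    (fun _ _ hab => preimage_mono (Ioi_subset_Ioi hab)) ⟨0, measure_ne_top _ _⟩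
  have hempty : ⋂ x : ℝ, X ⁻¹' Ioi x = ∅ :=
    eq_empty_of_forall_notMem fun ω hω => lt_irrefl (X ω) (mem_iInter.1 hω (X ω))
  rw [hempty, measure_empty] at hlim
  exact (ENNReal.tendsto_toReal ENNReal.zero_ne_top).comp hlim

end Tail

section TruncMean

variable {Ω : Type*} [MeasurableSpace Ω] {P : Measure Ω} {X Y : Ω → ℝ}

/-- The truncated mean `E[min X T]` of a nonnegative random variable `X`, written as the integral
of its tail over `[0, T]`. -/
def truncMean (P : Measure Ω) (X : Ω → ℝ) (T : ℝ) : ℝ := ∫ x in (0 : ℝ)..T, tail P X x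

lemma truncMean_congr (h : tail P Y = tail P X) : truncMean P Y = truncMean P X := by
  unfold truncMean
  rw [h]

variable [IsFiniteMeasure P]

lemma integrable_min_const (hX : Measurable X) (h0 : ∀ ω, 0 ≤ X ω) {T : ℝ} (hT : 0 ≤ T) :
    Integrable (fun ω => min (X ω) T) P := by
  refine .of_bound (hX.min measurable_const).aestronglyMeasurable T (ae_of_all _ fun ω => ?_)
  rw [Real.norm_of_nonneg (le_min (h0 ω) hT)]
  exact min_le_right _ _

lemma integral_min_const (hX : Measurable X) (h0 : ∀ ω, 0 ≤ X ω) {T : ℝ} (hT : 0 ≤ T) :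
    ∫ ω, min (X ω) T ∂P = truncMean P X T := by
  rw [(integrable_min_const hX h0 hT).integral_eq_integral_meas_lt
    (ae_of_all _ fun ω => le_min (h0 ω) hT), truncMean, intervalIntegral.integral_of_le hT,
    integral_Ioc_eq_integral_Ioo, setIntegral_eq_of_subset_of_forall_sdiff_eq_zero
      measurableSet_Ioi (Ioo_subset_Ioi_self : Ioo 0 T ⊆ Ioi 0)]
  · refine setIntegral_congr_fun measurableSet_Ioo fun t ht => ?_
    simp only [tail, measureReal_def, lt_min_iff, ht.2, and_true]
  · rintro t ⟨ht0, ht⟩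
    have hTt : T ≤ t := not_lt.1 fun h => ht ⟨ht0, h⟩
    simp [measureReal_def, not_lt.2 hTt]

lemma truncMean_sub_truncMean (a b : ℝ) :
    truncMean P X b - truncMean P X a = ∫ x in a..b, tail P X x :=
  intervalIntegral.integral_interval_sub_left (intervalIntegrable_tail _ _)
    (intervalIntegrable_tail _ _)

lemma mul_tail_le_truncMean_sub {a b : ℝ} (h : a ≤ b) :
    (b - a) * tail P X b ≤ truncMean P X b - truncMean P X a := by
  calc (b - a) * tail P X b = ∫ _ in a..b, tail P X b := by simp
    _ ≤ ∫ x in a..b, tail P X x :=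
      intervalIntegral.integral_mono_on h intervalIntegrable_const (intervalIntegrable_tail _ _)
        fun _ hx => antitone_tail hx.2
    _ = _ := (truncMean_sub_truncMean a b).symm

lemma monotone_truncMean : Monotone (truncMean P X) := fun _ b h =>
  sub_nonneg.1 ((mul_nonneg (sub_nonneg.2 h) (tail_nonneg b)).trans (mul_tail_le_truncMean_sub h))

lemma tendsto_truncMean_atTop (hX : Measurable X) (h0 : ∀ ω, 0 ≤ X ω)
    (hX_int : ¬ Integrable X P) : Tendsto (truncMean P X) atTop atTop := by
  refine (tendsto_atTop_of_monotone monotone_truncMean).resolve_right ?_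
  rintro ⟨m, hm⟩
  have tail_integrable : IntegrableOn (tail P X) (Ioi 0) := by
    refine integrableOn_Ioi_of_intervalIntegral_norm_bounded m 0
      (fun T : ℝ => (intervalIntegrable_tail 0 T).1) tendsto_id (Eventually.of_forall fun T => ?_)
    simp only [Real.norm_of_nonneg (tail_nonneg _)]
    exact monotone_truncMean.ge_of_tendsto hm T
  refine hX_int ⟨hX.aestronglyMeasurable, ?_⟩
  have lintegral_tail := tail_integrable.2
  rw [hasFiniteIntegral_iff_ofReal (ae_of_all _ fun x => tail_nonneg x)] at lintegral_tail
  rw [hasFiniteIntegral_iff_ofReal (ae_of_all _ h0),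
    lintegral_eq_lintegral_meas_lt P (ae_of_all _ h0) hX.aemeasurable]
  simpa only [tail, ENNReal.ofReal_toReal (measure_ne_top _ _)] using lintegral_tail

end TruncMean

section RegularVariation

variable {Ω : Type*} [MeasurableSpace Ω] {P : Measure Ω} {X Y : Ω → ℝ} {α : ℝ}

/-- `h = 1 / tail P X` is regularly varying at `+∞` with index `α`. -/
def TailRegularlyVarying (P : Measure Ω) (X : Ω → ℝ) (α : ℝ) : Prop :=
  ∀ l : ℝ, 0 < l → Tendsto (fun x => tail P X x / tail P X (l * x)) atTop (nhds (l ^ α))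

variable [IsFiniteMeasure P]

lemma TailRegularlyVarying.tail_pos (h : TailRegularlyVarying P X α) (x : ℝ) :
    0 < tail P X x := by
  have hratio := (h 1 one_pos).eventually_ne (by simp : (1 : ℝ) ^ α ≠ 0)
  obtain ⟨y, hy, hxy⟩ := (hratio.and (eventually_ge_atTop x)).exists
  have hy0 : tail P X y ≠ 0 := (div_ne_zero_iff.1 hy).1
  exact ((tail_nonneg y).lt_of_ne' hy0).trans_le (antitone_tail hxy)

lemma tendsto_truncMean_mul_div (h : TailRegularlyVarying P X 1)
    (hm : Tendsto (truncMean P X) atTop atTop) {l : ℝ} (hl : 0 < l) :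
    Tendsto (fun x => truncMean P X (l * x) / truncMean P X x) atTop (nhds 1) := by
  have hratio : Tendsto (fun x => l * tail P X (l * x) / tail P X x) atTop (nhds 1) := by
    have := ((h l hl).inv₀ (by simpa using hl.ne')).const_mul l
    simp only [rpow_one, mul_inv_cancel₀ hl.ne', inv_div] at this
    exact this.congr fun x => (mul_div_assoc _ _ _).symm
  have scaled_integrable (b : ℝ) :
      IntervalIntegrable (fun x => l * tail P X (l * x)) volume 0 b :=
    Antitone.intervalIntegrable fun _ _ hab =>
      mul_le_mul_of_nonneg_left (antitone_tail (mul_le_mul_of_nonneg_left hab hl.le)) hl.le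
  refine (tendsto_intervalIntegral_div_intervalIntegral scaled_integrable
    (intervalIntegrable_tail 0) (.of_forall h.tail_pos) hratio hm).congr fun T => ?_
  rw [intervalIntegral.integral_const_mul, intervalIntegral.mul_integral_comp_mul_left, mul_zero]
  rfl

lemma tendsto_mul_tail_div_truncMean (h : TailRegularlyVarying P X 1)
    (hm : Tendsto (truncMean P X) atTop atTop) :
    Tendsto (fun x => x * tail P X x / truncMean P X x) atTop (nhds 0) := by
  have hhalf := ((tendsto_truncMean_mul_div h hm one_half_pos).const_sub 1).const_mul 2
  rw [sub_self, mul_zero] at hhalf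
  refine squeeze_zero' ?_ ?_ hhalf
  · filter_upwards [eventually_gt_atTop 0, hm.eventually_gt_atTop 0] with x hx hmx
    have := tail_nonneg (P := P) (X := X) x
    positivity
  · filter_upwards [eventually_gt_atTop 0, hm.eventually_gt_atTop 0] with x hx hmx
    have hsub := mul_tail_le_truncMean_sub (P := P) (X := X) (half_le_self hx.le)
    rw [one_sub_div hmx.ne', ← mul_div_assoc, one_div_mul_eq_div]
    refine div_le_div_of_nonneg_right ?_ hmx.le
    linear_combination 2 * hsub

/- As `x → ∞`, `1 - (1 - t) ^ M` with `t = tail P X x → 0` is asymptotic to `M * t`. -/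
lemma tendsto_truncMean_div_of_tail_eq (hX : Measurable X) (hX_pos : ∀ x, 0 < tail P X x)
    (hm : Tendsto (truncMean P X) atTop atTop) (M : ℕ)
    (hY : ∀ x, tail P Y x = 1 - (1 - tail P X x) ^ M) :
    Tendsto (fun T => truncMean P Y T / truncMean P X T) atTop (nhds M) := by
  have hgeom : Tendsto (fun x => ∑ j ∈ Finset.range M, (1 - tail P X x) ^ j) atTop (nhds M) := by
    simpa using tendsto_finsetSum (Finset.range M) fun j _ =>
      (((tendsto_tail_atTop hX).const_sub 1).pow j : Tendsto (fun x => (1 - tail P X x) ^ j) _ _)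
  refine tendsto_intervalIntegral_div_intervalIntegral (intervalIntegrable_tail 0)
    (intervalIntegrable_tail 0) (.of_forall hX_pos) (hgeom.congr fun x => ?_) hm
  rw [hY, eq_div_iff (hX_pos x).ne']
  linear_combination -geom_sum_mul (1 - tail P X x) M

end RegularVariation

section Quantile

variable {Ω : Type*} [MeasurableSpace Ω] {P : Measure Ω} {X : Ω → ℝ} {α : ℝ}

lemma hinv_nonneg (y : ℝ) : 0 ≤ hinv P X y := Real.sInf_nonneg fun _ h => h.1

lemma inv_lt_tail_of_lt_hinv {x y : ℝ} (h0 : 0 ≤ x) (h : x < hinv P X y) :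
    y⁻¹ < tail P X x :=
  not_le.1 fun hc => h.not_ge (csInf_le ⟨0, fun _ hz => hz.1⟩ ⟨h0, hc⟩)

variable [IsFiniteMeasure P]

lemma nonempty_tail_le_inv (hX : Measurable X) {y : ℝ} (hy : 0 < y) :
    {x : ℝ | 0 ≤ x ∧ tail P X x ≤ y⁻¹}.Nonempty :=
  ((eventually_ge_atTop 0).and
    ((tendsto_tail_atTop hX).eventually_le_const (inv_pos.2 hy))).exists

lemma tail_le_inv_of_hinv_lt (hX : Measurable X) {x y : ℝ} (hy : 0 < y) (h : hinv P X y < x) :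
    tail P X x ≤ y⁻¹ := by
  obtain ⟨z, hz, hzx⟩ := exists_lt_of_csInf_lt (nonempty_tail_le_inv hX hy) h
  exact (antitone_tail hzx.le).trans hz.2

lemma tendsto_hinv_atTop (hX : Measurable X) (hX_pos : ∀ x, 0 < tail P X x) :
    Tendsto (hinv P X) atTop atTop := by
  refine tendsto_atTop.2 fun b => ?_
  filter_upwards [tendsto_inv_atTop_zero.eventually_lt_const (hX_pos b), eventually_gt_atTop 0]
    with y hy hy0
  refine le_csInf (nonempty_tail_le_inv hX hy0) fun x hx => ?_
  by_contra! hxb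
  exact (hy.trans_le (antitone_tail hxb.le)).not_ge hx.2

lemma tendsto_mul_tail_hinv (hX : Measurable X) (h : TailRegularlyVarying P X α) :
    Tendsto (fun y => y * tail P X (hinv P X y)) atTop (nhds 1) := by
  have ha := tendsto_hinv_atTop hX h.tail_pos
  have eventually_le {l : ℝ} (hl0 : 0 < l) (hl1 : l < 1) : ∀ᶠ y in atTop,
      tail P X (hinv P X y) / tail P X (l * hinv P X y) ≤ y * tail P X (hinv P X y) := by
    filter_upwards [ha.eventually_gt_atTop 0, eventually_gt_atTop 0] with y ha0 hy
    have hlt := inv_lt_tail_of_lt_hinv (mul_pos hl0 ha0).le (mul_lt_of_lt_one_left ha0 hl1)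
    rw [div_eq_inv_mul]
    exact mul_le_mul_of_nonneg_right (inv_le_of_inv_le₀ hy hlt.le) (tail_nonneg _)
  have eventually_ge {l : ℝ} (hl1 : 1 < l) : ∀ᶠ y in atTop,
      y * tail P X (hinv P X y) ≤ tail P X (hinv P X y) / tail P X (l * hinv P X y) := by
    filter_upwards [ha.eventually_gt_atTop 0, eventually_gt_atTop 0] with y ha0 hy
    have hle := tail_le_inv_of_hinv_lt hX hy (lt_mul_of_one_lt_left ha0 hl1)
    rw [div_eq_inv_mul]
    exact mul_le_mul_of_nonneg_right ((le_inv_comm₀ hy (h.tail_pos _)).2 hle) (tail_nonneg _)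
  have rpow_near_one : Tendsto (fun l : ℝ => l ^ α) (nhds 1) (nhds 1) := by
    simpa using (continuousAt_rpow_const 1 α (.inl one_ne_zero)).tendsto
  refine tendsto_order.2 ⟨fun b hb => ?_, fun b hb => ?_⟩
  · obtain ⟨l, hl1, hbl, hl0⟩ :=
      ((rpow_near_one.eventually_const_lt hb).and (eventually_gt_nhds one_pos)).exists_lt
    filter_upwards [((h l hl0).comp ha).eventually_const_lt hbl, eventually_le hl0 hl1]
      with y hratio hle using hratio.trans_le hle
  · obtain ⟨l, hl1, hlb⟩ := (rpow_near_one.eventually_lt_const hb).exists_gt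
    filter_upwards [((h l (one_pos.trans hl1)).comp ha).eventually_lt_const hlb,
      eventually_ge hl1] with y hratio hge using hge.trans_lt hratio

lemma tendsto_mul_tail_mul_hinv (hX : Measurable X) (h : TailRegularlyVarying P X α) {l : ℝ}
    (hl : 0 < l) :
    Tendsto (fun y => y * tail P X (l * hinv P X y)) atTop (nhds (l ^ α)⁻¹) := by
  have ha := tendsto_hinv_atTop hX h.tail_pos
  have hlim := (tendsto_mul_tail_hinv hX h).div ((h l hl).comp ha) (rpow_pos_of_pos hl α).ne'
  rw [one_div] at hlim
  refine hlim.congr fun y => ?_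
  have := (h.tail_pos (hinv P X y)).ne'
  have := (h.tail_pos (l * hinv P X y)).ne'
  simp only [Pi.div_apply, Function.comp_apply]
  field_simp

lemma tendsto_hinv_div_mul_truncMean (hX : Measurable X) (h : TailRegularlyVarying P X 1)
    (hm : Tendsto (truncMean P X) atTop atTop) :
    Tendsto (fun y => hinv P X y / (y * truncMean P X (hinv P X y))) atTop (nhds 0) := by
  have ha := tendsto_hinv_atTop hX h.tail_pos
  have hlim := ((tendsto_mul_tail_div_truncMean h hm).comp ha).div (tendsto_mul_tail_hinv hX h)
    one_ne_zero
  rw [zero_div] at hlim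
  refine hlim.congr fun y => ?_
  have := (h.tail_pos (hinv P X y)).ne'
  simp only [Pi.div_apply, Function.comp_apply]
  field_simp

lemma tendsto_truncMean_mul_hinv_sub_div (hX : Measurable X) (h : TailRegularlyVarying P X 1)
    (hm : Tendsto (truncMean P X) atTop atTop) {c : ℝ} (hc : 0 < c) :
    Tendsto (fun y => (truncMean P X (c * hinv P X y) - truncMean P X c) /
      truncMean P X (hinv P X y)) atTop (nhds 1) := by
  have ha := tendsto_hinv_atTop hX h.tail_pos
  simpa [sub_div] using ((tendsto_truncMean_mul_div h hm hc).comp ha).sub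
    ((hm.comp ha).const_div_atTop (truncMean P X c))

lemma bN_eq_truncMean_sub_div {N : ℕ} (hc : cN P X N ≠ 0) (n : ℕ) :
    bN P X N n = (truncMean P X (cN P X N * hinv P X n) - truncMean P X (cN P X N)) /
      (cN P X N * tail P X (cN P X N)) := by
  rw [bN, intervalIntegral.integral_div, intervalIntegral.integral_comp_mul_left _ hc, mul_one,
    truncMean_sub_truncMean, smul_eq_mul, ← div_div, ← div_eq_inv_mul]

end Quantile

section ConvergenceInMeasure

variable {Ω ι : Type*} [MeasurableSpace Ω] {P : Measure Ω} {l : Filter ι}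

lemma tendstoInMeasure_mul_of_tendsto {f : ι → Ω → ℝ} {c r : ℝ} {r' : ι → ℝ}
    (hf : TendstoInMeasure P f l fun _ => c) (hr : Tendsto r' l (nhds r)) :
    TendstoInMeasure P (fun i ω => r' i * f i ω) l fun _ => r * c := by
  rw [tendstoInMeasure_iff_norm] at hf ⊢
  intro ε hε
  set K := |r| + 1
  have : 0 < K := by positivity
  refine tendsto_of_tendsto_of_tendsto_of_le_of_le' tendsto_const_nhds
    (hf (ε / (2 * K)) (by positivity)) (.of_forall fun _ => zero_le) ?_
  have hshift : Tendsto (fun i => |(r' i - r) * c|) l (nhds 0) := by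
    simpa using ((hr.sub_const r).mul_const c).abs
  filter_upwards [hshift.eventually_lt_const (half_pos hε),
    hr.abs.eventually_lt_const (lt_add_one |r|)] with i hi_shift hi_bdd
  refine measure_mono fun ω hω => ?_
  simp only [Set.mem_ofPred_eq, Real.norm_eq_abs] at hω ⊢
  have hdecomp : |r' i * f i ω - r * c| ≤ |r' i| * |f i ω - c| + |(r' i - r) * c| := by
    rw [← abs_mul]
    exact (abs_add_le _ _).trans_eq' (by ring_nf)
  have hmul : |r' i| * |f i ω - c| ≤ K * |f i ω - c| := by gcongr
  rw [div_le_iff₀ (by positivity)]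
  linarith

lemma tendstoInMeasure_of_forall_measure_ne_le {E : Type*} [PseudoMetricSpace E]
    {f : ι → Ω → E} {g : Ω → E}
    (h : ∀ δ > 0, ∃ f' : ι → Ω → E, TendstoInMeasure P f' l g ∧
      ∀ᶠ i in l, P {ω | f' i ω ≠ f i ω} ≤ δ) :
    TendstoInMeasure P f l g := by
  rw [tendstoInMeasure_iff_dist]
  refine fun ε hε => ENNReal.tendsto_nhds_zero.2 fun δ hδ => ?_
  obtain ⟨f', hf', hne⟩ := h (δ / 2) (ENNReal.half_pos hδ.ne')
  filter_upwards [hne, ENNReal.tendsto_nhds_zero.1 (tendstoInMeasure_iff_dist.1 hf' ε hε) (δ / 2)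
    (ENNReal.half_pos hδ.ne')] with i hi_ne hi_dist
  have hsub : {ω | ε ≤ dist (f i ω) (g ω)} ⊆
      {ω | f' i ω ≠ f i ω} ∪ {ω | ε ≤ dist (f' i ω) (g ω)} := by
    intro ω hω
    by_cases heq : f' i ω = f i ω
    · right
      simpa only [Set.mem_ofPred_eq, heq] using hω
    · exact .inl heq
  calc P {ω | ε ≤ dist (f i ω) (g ω)}
      ≤ P {ω | f' i ω ≠ f i ω} + P {ω | ε ≤ dist (f' i ω) (g ω)} :=
        (measure_mono hsub).trans (measure_union_le _ _)
    _ ≤ δ := (add_le_add hi_ne hi_dist).trans_eq (ENNReal.add_halves δ)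

lemma tendstoInMeasure_const_of_forall_lt_of_le {Y U : ι → Ω → ℝ} {c : ℝ}
    (hlower : ∀ b < c, ∃ b' > b, ∃ L : ι → Ω → ℝ, TendstoInMeasure P L l (fun _ => b') ∧
      ∀ᶠ i in l, ∀ ω, L i ω ≤ Y i ω)
    (hU : TendstoInMeasure P U l fun _ => c) (hupper : ∀ᶠ i in l, ∀ ω, Y i ω ≤ U i ω) :
    TendstoInMeasure P Y l fun _ => c := by
  rw [tendstoInMeasure_iff_norm] at hU ⊢
  intro ε hε
  obtain ⟨b', hb', L, hL, hLY⟩ := hlower (c - ε / 2) (by linarith)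
  rw [tendstoInMeasure_iff_norm] at hL
  have hsum := (hL (ε / 2) (half_pos hε)).add (hU ε hε)
  rw [add_zero] at hsum
  refine tendsto_of_tendsto_of_tendsto_of_le_of_le' tendsto_const_nhds hsum
    (.of_forall fun _ => zero_le) ?_
  filter_upwards [hLY, hupper] with i hi_lower hi_upper
  refine (measure_mono fun ω hω => ?_).trans (measure_union_le _ _)
  simp only [Set.mem_ofPred_eq, Set.mem_union, Real.norm_eq_abs, le_abs] at hω ⊢
  have := hi_lower ω
  have := hi_upper ω
  rcases hω with hω | hω
  · right; left; linarith
  · left; right; linarith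

end ConvergenceInMeasure

section WeakLaw

variable {Ω ι : Type*} [MeasurableSpace Ω] {P : Measure Ω} [IsProbabilityMeasure P]

lemma variance_sum_le_mul_sum_integral {s : Finset ι} {Z : ι → Ω → ℝ} {T : ℝ}
    (hZ : ∀ i ∈ s, Measurable (Z i)) (hZ_mem : ∀ i ∈ s, ∀ ω, Z i ω ∈ Icc 0 T)
    (hindep : Set.Pairwise (s : Set ι) fun i j => IndepFun (Z i) (Z j) P) :
    variance (∑ i ∈ s, Z i) P ≤ T * ∑ i ∈ s, ∫ ω, Z i ω ∂P := by
  have hZ_Lp (i) (hi : i ∈ s) : MemLp (Z i) 2 P :=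
    memLp_of_bounded (ae_of_all _ (hZ_mem i hi)) (hZ i hi).aestronglyMeasurable 2
  rw [IndepFun.variance_sum hZ_Lp hindep, Finset.mul_sum]
  refine Finset.sum_le_sum fun i hi =>
    (variance_le_expectation_sq (hZ i hi).aestronglyMeasurable).trans ?_
  rw [← integral_const_mul]
  refine integral_mono (hZ_Lp i hi).integrable_sq
    (((hZ_Lp i hi).integrable one_le_two).const_mul T) fun ω => ?_
  obtain ⟨h0, hT⟩ := hZ_mem i hi ω
  rw [Pi.pow_apply, sq]
  exact mul_le_mul_of_nonneg_right hT h0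

lemma measure_le_norm_sum_div_sub_one_le {s : Finset ι} {Z : ι → Ω → ℝ} {T m ε : ℝ}
    (hZ : ∀ i ∈ s, Measurable (Z i)) (hZ_mem : ∀ i ∈ s, ∀ ω, Z i ω ∈ Icc 0 T)
    (hindep : Set.Pairwise (s : Set ι) fun i j => IndepFun (Z i) (Z j) P)
    (hm : ∑ i ∈ s, ∫ ω, Z i ω ∂P = m) (hm_pos : 0 < m) (hε : 0 < ε) :
    P {ω | ε ≤ ‖(∑ i ∈ s, Z i ω) / m - 1‖} ≤ ENNReal.ofReal (T / m / ε ^ 2) := by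
  have hZ_Lp (i) (hi : i ∈ s) : MemLp (Z i) 2 P :=
    memLp_of_bounded (ae_of_all _ (hZ_mem i hi)) (hZ i hi).aestronglyMeasurable 2
  have chebyshev := meas_ge_le_variance_div_sq (memLp_finsetSum' s hZ_Lp) (mul_pos hε hm_pos)
  simp only [Finset.sum_apply] at chebyshev
  rw [integral_finsetSum _ fun i hi => (hZ_Lp i hi).integrable one_le_two, hm] at chebyshev
  have hset (ω : Ω) : ε ≤ ‖(∑ i ∈ s, Z i ω) / m - 1‖ ↔ ε * m ≤ |∑ i ∈ s, Z i ω - m| := by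
    rw [div_sub_one hm_pos.ne', norm_div, Real.norm_of_nonneg hm_pos.le, le_div_iff₀ hm_pos,
      Real.norm_eq_abs]
  simp only [hset]
  refine chebyshev.trans (ENNReal.ofReal_le_ofReal ?_)
  calc variance (∑ i ∈ s, Z i) P / (ε * m) ^ 2 ≤ T * m / (ε * m) ^ 2 := by
        gcongr
        exact hm ▸ variance_sum_le_mul_sum_integral hZ hZ_mem hindep
    _ = T / m / ε ^ 2 := by field_simp

lemma tendstoInMeasure_sum_min_div {κ : Type*} {l : Filter κ} {Y : Ω → ℝ} {Z : ι → Ω → ℝ}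
    {s : κ → Finset ι} {T : κ → ℝ} (hZ : ∀ i, Measurable (Z i)) (hZ0 : ∀ i ω, 0 ≤ Z i ω)
    (hZ_tail : ∀ i, tail P (Z i) = tail P Y) (hindep : Pairwise fun i j => IndepFun (Z i) (Z j) P)
    (hT : ∀ᶠ n in l, 0 ≤ T n) (hm : ∀ᶠ n in l, 0 < (s n).card * truncMean P Y (T n))
    (hlim : Tendsto (fun n => T n / ((s n).card * truncMean P Y (T n))) l (nhds 0)) :
    TendstoInMeasure P
      (fun n ω => (∑ i ∈ s n, min (Z i ω) (T n)) / ((s n).card * truncMean P Y (T n))) l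
      fun _ => 1 := by
  refine tendstoInMeasure_iff_norm.2 fun ε hε => ?_
  have hbound := ENNReal.tendsto_ofReal (hlim.div_const (ε ^ 2))
  rw [zero_div, ENNReal.ofReal_zero] at hbound
  refine tendsto_of_tendsto_of_tendsto_of_le_of_le' tendsto_const_nhds hbound
    (.of_forall fun _ => zero_le) ?_
  filter_upwards [hT, hm] with n hTn hmn
  have hmin : Measurable fun x => min x (T n) := measurable_id.min measurable_const
  refine measure_le_norm_sum_div_sub_one_le (fun i _ => hmin.comp (hZ i))
    (fun i _ ω => ⟨le_min (hZ0 i ω) hTn, min_le_right _ _⟩)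
    (fun i _ j _ hij => (hindep hij).comp hmin hmin) ?_ hmn hε
  have hmean (i) : ∫ ω, min (Z i ω) (T n) ∂P = truncMean P Y (T n) := by
    rw [integral_min_const (hZ i) (hZ0 i) hTn, truncMean_congr (hZ_tail i)]
  simp only [hmean, Finset.sum_const, nsmul_eq_mul]

section RelativeStability

variable {X Y : Ω → ℝ} {Z : ι → Ω → ℝ} {s : ℕ → Finset ι} {κ : ℝ}

lemma tendstoInMeasure_sum_min_hinv_div (hX : Measurable X) (hRV : TailRegularlyVarying P X 1)
    (hm : Tendsto (truncMean P X) atTop atTop) (hZ : ∀ i, Measurable (Z i))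
    (hZ0 : ∀ i ω, 0 ≤ Z i ω) (hZ_tail : ∀ i, tail P (Z i) = tail P Y)
    (hindep : Pairwise fun i j => IndepFun (Z i) (Z j) P) {K r : ℝ} (hK : 0 ≤ K) (hκ : 0 < κ)
    (hr : 0 < r) (hs : Tendsto (fun n => ((s n).card : ℝ) / n) atTop (nhds κ))
    (hY : Tendsto (fun n : ℕ => truncMean P Y (K * hinv P X n) / truncMean P X (hinv P X n))
      atTop (nhds r)) :
    TendstoInMeasure P
      (fun n ω => (∑ i ∈ s n, min (Z i ω) (K * hinv P X n)) / (n * truncMean P X (hinv P X n)))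
      atTop fun _ => κ * r := by
  have ha := (tendsto_hinv_atTop hX hRV.tail_pos).comp tendsto_natCast_atTop_atTop
  have hratio : Tendsto (fun n : ℕ => (s n).card * truncMean P Y (K * hinv P X n) /
      (n * truncMean P X (hinv P X n))) atTop (nhds (κ * r)) :=
    (hs.mul hY).congr fun n => div_mul_div_comm _ _ _ _
  have norm_pos : ∀ᶠ n : ℕ in atTop, 0 < n * truncMean P X (hinv P X n) := by
    filter_upwards [eventually_gt_atTop 0, (hm.comp ha).eventually_gt_atTop 0] with n hn hmn
      using mul_pos (Nat.cast_pos.2 hn) hmn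
  have mean_pos : ∀ᶠ n : ℕ in atTop, 0 < (s n).card * truncMean P Y (K * hinv P X n) := by
    filter_upwards [norm_pos, hratio.eventually_const_lt (mul_pos hκ hr)] with n hn hn'
      using (div_pos_iff_of_pos_right hn).1 hn'
  have level_negligible : Tendsto (fun n : ℕ => K * hinv P X n /
      ((s n).card * truncMean P Y (K * hinv P X n))) atTop (nhds 0) := by
    have hlim := (((tendsto_hinv_div_mul_truncMean hX hRV hm).comp
      tendsto_natCast_atTop_atTop).const_mul K).div hratio (mul_pos hκ hr).ne'
    rw [mul_zero, zero_div] at hlim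
    refine hlim.congr' (norm_pos.mono fun n hn => ?_)
    simp only [Pi.div_apply, Function.comp_apply]
    rw [← mul_div_assoc, div_div_div_cancel_right₀ hn.ne']
  have hweak := tendstoInMeasure_sum_min_div hZ hZ0 hZ_tail hindep
    (.of_forall fun n : ℕ => mul_nonneg hK (hinv_nonneg n)) mean_pos level_negligible
  have hscaled := tendstoInMeasure_mul_of_tendsto hweak hratio
  rw [mul_one] at hscaled
  refine hscaled.congr' (mean_pos.mono fun n hn => .of_forall fun ω => ?_) .rfl
  rw [mul_comm, div_mul_div_cancel₀ hn.ne']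

lemma measure_sum_min_ne_le {t : Finset ι} {T : ℝ} (hZ_tail : ∀ i, tail P (Z i) = tail P X) :
    P {ω | ∑ i ∈ t, min (Z i ω) T ≠ ∑ i ∈ t, Z i ω} ≤ ENNReal.ofReal (t.card * tail P X T) := by
  have hsub : {ω | ∑ i ∈ t, min (Z i ω) T ≠ ∑ i ∈ t, Z i ω} ⊆ ⋃ i ∈ t, {ω | T < Z i ω} := by
    intro ω hω
    simp only [mem_iUnion, Set.mem_ofPred_eq]
    by_contra! hle
    exact hω (Finset.sum_congr rfl fun i hi => min_eq_left (hle i hi))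
  have hP (i) : P {ω | T < Z i ω} = ENNReal.ofReal (tail P X T) := by
    rw [← hZ_tail i, tail, ENNReal.ofReal_toReal (measure_ne_top _ _)]
  calc P {ω | ∑ i ∈ t, min (Z i ω) T ≠ ∑ i ∈ t, Z i ω}
      ≤ ∑ i ∈ t, P {ω | T < Z i ω} := (measure_mono hsub).trans (measure_biUnion_finset_le _ _)
    _ = ENNReal.ofReal (t.card * tail P X T) := by
      simp only [hP, Finset.sum_const, ENNReal.ofReal_mul (Nat.cast_nonneg t.card),
        ENNReal.ofReal_natCast, nsmul_eq_mul]

lemma tendstoInMeasure_sum_div_hinv (hX : Measurable X) (hRV : TailRegularlyVarying P X 1)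
    (hm : Tendsto (truncMean P X) atTop atTop) (hZ : ∀ i, Measurable (Z i))
    (hZ0 : ∀ i ω, 0 ≤ Z i ω) (hZ_tail : ∀ i, tail P (Z i) = tail P X)
    (hindep : Pairwise fun i j => IndepFun (Z i) (Z j) P) (hκ : 0 < κ)
    (hs : Tendsto (fun n => ((s n).card : ℝ) / n) atTop (nhds κ)) :
    TendstoInMeasure P
      (fun n ω => (∑ i ∈ s n, Z i ω) / (n * truncMean P X (hinv P X n))) atTop fun _ => κ := by
  refine tendstoInMeasure_of_forall_measure_ne_le fun δ hδ => ?_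
  obtain ⟨K, hKδ, hK⟩ : ∃ K : ℝ, ENNReal.ofReal (κ * K⁻¹) < δ ∧ 0 < K := by
    have hlim := ENNReal.tendsto_ofReal (tendsto_inv_atTop_zero.const_mul κ)
    rw [mul_zero, ENNReal.ofReal_zero] at hlim
    exact ((hlim.eventually_lt_const hδ).and (eventually_gt_atTop 0)).exists
  refine ⟨_, mul_one κ ▸ tendstoInMeasure_sum_min_hinv_div hX hRV hm hZ hZ0 hZ_tail hindep hK.le hκ
    one_pos hs ((tendsto_truncMean_mul_div hRV hm hK).comp
      ((tendsto_hinv_atTop hX hRV.tail_pos).comp tendsto_natCast_atTop_atTop)), ?_⟩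
  have hexceed : Tendsto (fun n : ℕ => ENNReal.ofReal ((s n).card * tail P X (K * hinv P X n)))
      atTop (nhds (ENNReal.ofReal (κ * K⁻¹))) := by
    have htail := (tendsto_mul_tail_mul_hinv hX hRV hK).comp tendsto_natCast_atTop_atTop
    rw [rpow_one] at htail
    refine ENNReal.tendsto_ofReal ((hs.mul htail).congr' ?_)
    filter_upwards [eventually_gt_atTop 0] with n hn
    simp only [Function.comp_apply]
    field_simp
  filter_upwards [hexceed.eventually_lt_const hKδ] with n hn
  refine (measure_mono fun ω hω => ?_).trans ((measure_sum_min_ne_le hZ_tail).trans hn.le)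
  exact fun heq => hω (congrArg (· / (n * truncMean P X (hinv P X n))) heq)

end RelativeStability

end WeakLaw

section Selection

/-- Number of particles of the configuration `pos` located at or above level `a`. -/
def numAbove {ι : Type*} [Fintype ι] (pos : ι → ℝ) (a : ℝ) : ℕ :=
  (Finset.univ.filter fun i => a ≤ pos i).card

/-- Positions of the `2N` children of the configuration `pos`, before selection. -/
def offspring {N : ℕ} (pos : Fin N → ℝ) (jump : Fin N → Fin 2 → ℝ) (p : Fin N × Fin 2) : ℝ :=
  pos p.1 + jump p.1 p.2

lemma numAbove_pos_iff {ι : Type*} [Fintype ι] {pos : ι → ℝ} {a : ℝ} :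
    0 < numAbove pos a ↔ ∃ i, a ≤ pos i := by
  simp [numAbove, Finset.card_pos, Finset.filter_nonempty_iff]

lemma card_le_numAbove_iff {ι : Type*} [Fintype ι] {pos : ι → ℝ} {a : ℝ} :
    Fintype.card ι ≤ numAbove pos a ↔ ∀ i, a ≤ pos i := by
  rw [numAbove, (Finset.card_le_univ _).ge_iff_eq, Finset.card_eq_iff_eq_univ,
    Finset.filter_eq_self]
  simp only [Finset.mem_univ, true_imp_iff]

lemma le_getElem_iff_countP_lt_le {α : Type*} [LinearOrder α] {l : List α}
    (hl : l.Pairwise (· ≤ ·)) {k : ℕ} (hk : k < l.length) {a : α} :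
    a ≤ l[k] ↔ l.countP (· < a) ≤ k := by
  induction l generalizing k with
  | nil => simp at hk
  | cons x l ih =>
    obtain ⟨hx, hl⟩ := List.pairwise_cons.1 hl
    rcases lt_or_ge x a with hxa | hax
    · rw [List.countP_cons_of_pos (by simpa using hxa)]
      cases k with
      | zero => simpa using hxa
      | succ k => simpa using ih hl (Nat.lt_of_succ_lt_succ hk)
    · have hmem : ∀ y ∈ x :: l, a ≤ y := by
        simpa using ⟨hax, fun y hy => hax.trans (hx y hy)⟩
      rw [List.countP_eq_zero.2 fun y hy => by simpa using hmem y hy]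
      simpa using hmem _ (List.getElem_mem hk)

variable {N : ℕ} {pos : Fin N → ℝ} {jump : Fin N → Fin 2 → ℝ} {a : ℝ}

lemma le_brwStep_iff {i : Fin N} :
    a ≤ brwStep N pos jump i ↔ N ≤ numAbove (offspring pos jump) a + i := by
  set s : Multiset ℝ := Finset.univ.val.map (offspring pos jump) with hs
  have hlen : N + i < (s.sort (· ≤ ·)).length := by
    simp only [hs, Multiset.length_sort, Multiset.card_map, Finset.card_val, Finset.card_univ,
      Fintype.card_prod, Fintype.card_fin]
    omega
  have hbelow : (s.sort (· ≤ ·)).countP (· < a) + numAbove (offspring pos jump) a = N * 2 := by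
    rw [← Multiset.coe_countP, Multiset.sort_eq, hs, Multiset.countP_map, numAbove,
      ← Finset.filter_val, Finset.card_val]
    simpa using Finset.card_filter_add_card_filter_not (s := Finset.univ)
      fun p => offspring pos jump p < a
  have hget : brwStep N pos jump i = (s.sort (· ≤ ·))[N + i] := List.getD_eq_getElem _ _ hlen
  rw [hget, le_getElem_iff_countP_lt_le (Multiset.pairwise_sort _ _)]
  omega

lemma numAbove_brwStep :
    numAbove (brwStep N pos jump) a = min N (numAbove (offspring pos jump) a) := by
  set m := numAbove (offspring pos jump) a
  have hbelow : (Finset.univ.filter fun i : Fin N => ¬ a ≤ brwStep N pos jump i).card = N - m := by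
    have (i : Fin N) : ¬ a ≤ brwStep N pos jump i ↔ (i : ℕ) < N - m := by
      rw [le_brwStep_iff]
      omega
    simp only [this, Fin.card_filter_val_lt]
    omega
  have htotal := Finset.card_filter_add_card_filter_not (s := (Finset.univ : Finset (Fin N)))
    fun i => a ≤ brwStep N pos jump i
  rw [hbelow, Finset.card_fin] at htotal
  unfold numAbove
  omega

lemma exists_brwStep_le_offspring (i : Fin N) :
    ∃ p, brwStep N pos jump i ≤ offspring pos jump p := by
  have := le_brwStep_iff.1 (le_refl (brwStep N pos jump i))
  exact numAbove_pos_iff.1 (by omega)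

lemma two_mul_numAbove_le_numAbove_offspring (hjump : ∀ i j, 0 ≤ jump i j) :
    2 * numAbove pos a ≤ numAbove (offspring pos jump) a := by
  have hsub : (Finset.univ.filter fun i => a ≤ pos i) ×ˢ (Finset.univ : Finset (Fin 2)) ⊆
      Finset.univ.filter fun p => a ≤ offspring pos jump p := fun p hp => by
    simp only [Finset.mem_product, Finset.mem_filter, Finset.mem_univ, true_and, and_true] at hp ⊢
    exact le_add_of_le_of_nonneg hp (hjump _ _)
  have hcard := Finset.card_le_card hsub
  rwa [Finset.card_product, Finset.card_fin, mul_comm] at hcard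

end Selection

section Dynamics

variable {N : ℕ} {x₀ : Fin N → ℝ} {jump : ℕ → Fin N → Fin 2 → ℝ}

lemma min_two_pow_mul_le_numAbove_brw (hjump : ∀ n i j, 0 ≤ jump n i j) (s k : ℕ) (a : ℝ) :
    min N (2 ^ k * numAbove (brw N x₀ jump s) a) ≤ numAbove (brw N x₀ jump (s + k)) a := by
  induction k with
  | zero => simp
  | succ k ih =>
    have hdouble := two_mul_numAbove_le_numAbove_offspring (pos := brw N x₀ jump (s + k)) (a := a)
      (hjump (s + k))
    rw [← add_assoc, brw, numAbove_brwStep, pow_succ', mul_assoc]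
    omega

lemma le_brw_add_of_forall_le (hjump : ∀ n i j, 0 ≤ jump n i j) {s : ℕ} {a : ℝ}
    (h : ∀ i, a ≤ brw N x₀ jump s i) (k : ℕ) (i : Fin N) : a ≤ brw N x₀ jump (s + k) i := by
  have hspread := min_two_pow_mul_le_numAbove_brw hjump s k a (x₀ := x₀)
  have hall := card_le_numAbove_iff.2 h
  rw [Fintype.card_fin] at hall
  refine card_le_numAbove_iff.1 ?_ i
  rw [Fintype.card_fin]
  refine (le_min le_rfl ?_).trans hspread
  exact hall.trans (Nat.le_mul_of_pos_left _ (by positivity))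

lemma le_brw_add_of_exists_le (hjump : ∀ n i j, 0 ≤ jump n i j) {s l : ℕ} (hl : N ≤ 2 ^ l) {a : ℝ}
    (h : ∃ i, a ≤ brw N x₀ jump s i) (i : Fin N) : a ≤ brw N x₀ jump (s + l) i := by
  have hspread := min_two_pow_mul_le_numAbove_brw hjump s l a (x₀ := x₀)
  refine card_le_numAbove_iff.1 ?_ i
  rw [Fintype.card_fin]
  refine (le_min le_rfl ?_).trans hspread
  exact hl.trans (Nat.le_mul_of_pos_right _ (numAbove_pos_iff.2 h))

/-- Largest jump of the `A` generations starting at generation `s`. -/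
def blockMax (jump : ℕ → Fin N → Fin 2 → ℝ) (A s : ℕ) : ℝ :=
  ⨆ p : Fin A × Fin N × Fin 2, jump (s + p.1) p.2.1 p.2.2

lemma exists_le_brw_succ {s : ℕ} {b : ℝ}
    (h : ∀ i, b ≤ brw N x₀ jump s i) (i : Fin N) (j : Fin 2) :
    ∃ i', b + jump s i j ≤ brw N x₀ jump (s + 1) i' := by
  rw [brw, ← numAbove_pos_iff, numAbove_brwStep]
  exact lt_min i.pos (numAbove_pos_iff.2 ⟨(i, j), add_le_add_left (h i) _⟩)

lemma add_blockMax_le_brw (hjump : ∀ n i j, 0 ≤ jump n i j) {A l s : ℕ} (hA : 0 < A)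
    (hl : N ≤ 2 ^ l) {b : ℝ} (h : ∀ i, b ≤ brw N x₀ jump s i) (i : Fin N) :
    b + blockMax jump A s ≤ brw N x₀ jump (s + (A + l)) i := by
  have : Nonempty (Fin A × Fin N × Fin 2) := ⟨⟨0, hA⟩, i, 0⟩
  obtain ⟨⟨r, i', j⟩, hmax⟩ := exists_eq_ciSup_of_finite
    (f := fun p : Fin A × Fin N × Fin 2 => jump (s + p.1) p.2.1 p.2.2)
  rw [blockMax, ← hmax]
  have hjumped := exists_le_brw_succ (le_brw_add_of_forall_le hjump h r) i' j
  have hspread := le_brw_add_of_forall_le hjump (le_brw_add_of_exists_le hjump hl hjumped)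
    (A - r - 1) i
  rwa [show s + r + 1 + l + (A - r - 1) = s + (A + l) by omega] at hspread

lemma sum_blockMax_le_brwMin (hN : 0 < N) (hjump : ∀ n i j, 0 ≤ jump n i j) {A l : ℕ} (hA : 0 < A)
    (hl : N ≤ 2 ^ l) (n : ℕ) :
    ∑ k ∈ Finset.range (n / (A + l)), blockMax jump A (k * (A + l)) ≤ brwMin N jump n := by
  have hblocks (k : ℕ) (i : Fin N) : ∑ t ∈ Finset.range k, blockMax jump A (t * (A + l)) ≤
      brw N (fun _ => 0) jump (k * (A + l)) i := by
    induction k generalizing i with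
    | zero => simp [brw]
    | succ k ih =>
      rw [Finset.sum_range_succ, Nat.succ_mul]
      exact add_blockMax_le_brw hjump hA hl ih i
  have : Nonempty (Fin N) := ⟨⟨0, hN⟩⟩
  refine le_ciInf fun i => ?_
  have hrest := le_brw_add_of_forall_le hjump (hblocks (n / (A + l))) (n - n / (A + l) * (A + l)) i
  rwa [Nat.add_sub_cancel' (Nat.div_mul_le_self _ _)] at hrest

lemma brwMax_le_sum (hN : 0 < N) (hjump : ∀ n i j, 0 ≤ jump n i j) (n : ℕ) :
    brwMax N jump n ≤ ∑ p ∈ Finset.range n ×ˢ (Finset.univ : Finset (Fin N × Fin 2)),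
      jump p.1 p.2.1 p.2.2 := by
  have : Nonempty (Fin N) := ⟨⟨0, hN⟩⟩
  refine ciSup_le fun i => ?_
  rw [Finset.sum_product]
  induction n generalizing i with
  | zero => simp [brw]
  | succ n ih =>
    obtain ⟨p, hp⟩ :=
      exists_brwStep_le_offspring (pos := brw N (fun _ => 0) jump n) (jump := jump n) i
    rw [Finset.sum_range_succ]
    exact hp.trans (add_le_add (ih p.1) (Finset.single_le_sum
      (f := fun q : Fin N × Fin 2 => jump n q.1 q.2) (fun _ _ => hjump _ _ _) (Finset.mem_univ p)))

lemma brwMin_le_brwMax (n : ℕ) : brwMin N jump n ≤ brwMax N jump n := by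
  rcases isEmpty_or_nonempty (Fin N) with hempty | hnonempty
  · rw [brwMin, brwMax, Real.iInf_of_isEmpty, Real.iSup_of_isEmpty]
  · exact ciInf_le_ciSup (Set.finite_range _).bddBelow (Set.finite_range _).bddAbove

end Dynamics

section Measurability

variable {N : ℕ}

lemma measurable_brwStep (i : Fin N) :
    Measurable fun q : (Fin N → ℝ) × (Fin N → Fin 2 → ℝ) => brwStep N q.1 q.2 i := by
  refine measurable_of_Ici fun a => ?_
  simp only [preimage, Set.mem_Ici, le_brwStep_iff, numAbove, Finset.card_filter]
  refine measurableSet_le measurable_const ((Finset.measurable_sum _ fun p _ => ?_).add_const _)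
  exact .ite (measurableSet_le measurable_const (by unfold offspring; fun_prop))
    measurable_const measurable_const

lemma measurable_brw (x₀ : Fin N → ℝ) (n : ℕ) (i : Fin N) :
    Measurable fun jump => brw N x₀ jump n i := by
  induction n generalizing i with
  | zero => exact measurable_const
  | succ n ih =>
    exact (measurable_brwStep i).comp ((measurable_pi_lambda _ ih).prodMk (measurable_pi_apply n))

lemma measurable_brwMax (n : ℕ) : Measurable fun jump => brwMax N jump n :=
  .iSup fun i => measurable_brw _ n i

lemma measurable_brwMin (n : ℕ) : Measurable fun jump => brwMin N jump n :=
  .iInf fun i => measurable_brw _ n i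

end Measurability

section Maxima

variable {Ω ι κ κ' : Type*} [MeasurableSpace Ω] {P : Measure Ω}

lemma tail_iSup_of_iIndepFun [IsProbabilityMeasure P] [Fintype κ] [Nonempty κ] {X : Ω → ℝ}
    {Z : κ → Ω → ℝ} (hZ : ∀ i, Measurable (Z i)) (hZ_tail : ∀ i, tail P (Z i) = tail P X)
    (hindep : iIndepFun Z P) (x : ℝ) :
    tail P (fun ω => ⨆ i, Z i ω) x = 1 - (1 - tail P X x) ^ Fintype.card κ := by
  have hle (i) : P.real (Z i ⁻¹' Iic x) = 1 - tail P X x := by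
    rw [← hZ_tail i, ← compl_Ioi, preimage_compl,
      probReal_compl_eq_one_sub (hZ i measurableSet_Ioi)]
    rfl
  have hset : {ω | x < ⨆ i, Z i ω} = (⋂ i ∈ Finset.univ, Z i ⁻¹' Iic x)ᶜ := by
    ext ω
    simp [lt_ciSup_iff (Set.finite_range fun i => Z i ω).bddAbove]
  have hprod : P.real (⋂ i ∈ Finset.univ, Z i ⁻¹' Iic x) =
      (1 - tail P X x) ^ Fintype.card κ := by
    rw [measureReal_def, hindep.measure_inter_preimage_eq_mul _ fun _ _ => measurableSet_Iic,
      ENNReal.toReal_prod]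
    simp only [← measureReal_def, hle, Finset.prod_const, Finset.card_univ]
  rw [tail, hset, ← measureReal_def, probReal_compl_eq_one_sub, hprod]
  exact Finset.measurableSet_biInter _ fun i _ => hZ i measurableSet_Iic

lemma indepFun_iSup_of_disjoint_range [Finite κ] [Finite κ'] {Z : ι → Ω → ℝ}
    (hZ : ∀ i, Measurable (Z i)) (hindep : iIndepFun Z P) {g : κ → ι} {g' : κ' → ι}
    (hdisj : Disjoint (range g) (range g')) :
    IndepFun (fun ω => ⨆ k, Z (g k) ω) (fun ω => ⨆ k, Z (g' k) ω) P := by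
  have hblocks := hindep.indepFun_finset (finite_range g).toFinset (finite_range g').toFinset
    (by simpa using hdisj) hZ
  exact hblocks.comp
    (φ := fun f => ⨆ k, f ⟨g k, by simp⟩) (ψ := fun f => ⨆ k, f ⟨g' k, by simp⟩)
    (.iSup fun _ => measurable_pi_apply _) (.iSup fun _ => measurable_pi_apply _)

end Maxima

section JumpField

variable {Ω : Type*} [MeasurableSpace Ω] {P : Measure Ω} {X : Ω → ℝ} {N : ℕ}
  {ξ : ℕ → Fin N → Fin 2 → Ω → ℝ}

/-- The random jumps driving an `N`-BRW: independent nonnegative variables whose common tail is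
that of `X`. -/
structure IsJumpField (P : Measure Ω) (X : Ω → ℝ) (ξ : ℕ → Fin N → Fin 2 → Ω → ℝ) : Prop where
  measurable (n i j) : Measurable (ξ n i j)
  nonneg (n i j ω) : 0 ≤ ξ n i j ω
  tail_eq (n i j) : tail P (ξ n i j) = tail P X
  iIndepFun : iIndepFun (fun p : ℕ × Fin N × Fin 2 => ξ p.1 p.2.1 p.2.2) P

namespace IsJumpField

lemma measurable_comp (hξ : IsJumpField P X ξ) {f : (ℕ → Fin N → Fin 2 → ℝ) → ℝ}
    (hf : Measurable f) : Measurable fun ω => f fun n i j => ξ n i j ω :=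
  hf.comp (by have := hξ.measurable; fun_prop)

lemma tail_blockMax [IsProbabilityMeasure P] (hξ : IsJumpField P X ξ) (hN : 0 < N) {A : ℕ}
    (hA : 0 < A) (s : ℕ) (x : ℝ) :
    tail P (fun ω => blockMax (fun n i j => ξ n i j ω) A s) x =
      1 - (1 - tail P X x) ^ (A * (N * 2)) := by
  have : Nonempty (Fin A × Fin N × Fin 2) := ⟨⟨0, hA⟩, ⟨0, hN⟩, 0⟩
  have hinj : Function.Injective fun p : Fin A × Fin N × Fin 2 => (s + (p.1 : ℕ), p.2) :=
    fun p q hpq => by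
      simpa [Prod.ext_iff, Fin.ext_iff] using hpq
  simpa [blockMax] using tail_iSup_of_iIndepFun
    (fun p : Fin A × Fin N × Fin 2 => hξ.measurable _ _ _) (fun p => hξ.tail_eq _ _ _)
    (hξ.iIndepFun.precomp hinj) x

lemma indepFun_blockMax (hξ : IsJumpField P X ξ) {A L k k' : ℕ} (hAL : A ≤ L) (hk : k ≠ k') :
    IndepFun (fun ω => blockMax (fun n i j => ξ n i j ω) A (k * L))
      (fun ω => blockMax (fun n i j => ξ n i j ω) A (k' * L)) P := by
  have hdiv (k : ℕ) (r : Fin A) : (k * L + r) / L = k := by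
    have := r.2
    rw [mul_comm, Nat.mul_add_div (by omega), Nat.div_eq_of_lt (by omega), add_zero]
  refine indepFun_iSup_of_disjoint_range
    (g := fun p : Fin A × Fin N × Fin 2 => (k * L + (p.1 : ℕ), p.2))
    (g' := fun p : Fin A × Fin N × Fin 2 => (k' * L + (p.1 : ℕ), p.2))
    (fun p => hξ.measurable _ _ _) hξ.iIndepFun (Set.disjoint_left.2 ?_)
  rintro _ ⟨p, rfl⟩ ⟨q, hq⟩
  exact hk (by rw [← hdiv k p.1, ← hdiv k' q.1, (Prod.mk.inj hq).1])

end IsJumpField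

end JumpField

section FixedPopulation

variable {Ω : Type*} [MeasurableSpace Ω] {P : Measure Ω} [IsProbabilityMeasure P] {X : Ω → ℝ}
  {N : ℕ} {ξ : ℕ → Fin N → Fin 2 → Ω → ℝ}

lemma tendsto_natCast_div_div_atTop (L : ℕ) :
    Tendsto (fun n : ℕ => ((n / L : ℕ) : ℝ) / n) atTop (nhds (L : ℝ)⁻¹) := by
  refine ((tendsto_nat_floor_mul_div_atTop (R := ℝ) (a := (L : ℝ)⁻¹) (by positivity)).comp
    tendsto_natCast_atTop_atTop).congr fun n => ?_
  rw [Function.comp_apply, ← div_eq_inv_mul, Nat.floor_div_eq_div]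

lemma tendstoInMeasure_sum_jump_div (hX : Measurable X) (hRV : TailRegularlyVarying P X 1)
    (hm : Tendsto (truncMean P X) atTop atTop) (hξ : IsJumpField P X ξ) (hN : 0 < N) :
    TendstoInMeasure P (fun (n : ℕ) ω =>
      (∑ p ∈ Finset.range n ×ˢ (Finset.univ : Finset (Fin N × Fin 2)), ξ p.1 p.2.1 p.2.2 ω) /
        (n * truncMean P X (hinv P X n))) atTop fun _ => N * 2 := by
  refine tendstoInMeasure_sum_div_hinv (Z := fun p : ℕ × Fin N × Fin 2 => ξ p.1 p.2.1 p.2.2)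
    hX hRV hm (fun _ => hξ.measurable _ _ _) (fun _ _ => hξ.nonneg _ _ _ _)
    (fun _ => hξ.tail_eq _ _ _) (fun _ _ hpq => hξ.iIndepFun.indepFun hpq) (by positivity) ?_
  refine tendsto_const_nhds.congr' ?_
  filter_upwards [eventually_gt_atTop 0] with n hn
  simp only [Finset.card_product, Finset.card_range, Finset.card_univ, Fintype.card_prod,
    Fintype.card_fin, Nat.cast_mul, Nat.cast_ofNat]
  field_simp

lemma tendstoInMeasure_sum_min_blockMax_div (hX : Measurable X) (hRV : TailRegularlyVarying P X 1)
    (hm : Tendsto (truncMean P X) atTop atTop) (hξ : IsJumpField P X ξ) (hN : 0 < N) {A : ℕ}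
    (hA : 0 < A) (l : ℕ) :
    TendstoInMeasure P (fun (n : ℕ) ω => (∑ k ∈ Finset.range (n / (A + l)),
        min (blockMax (fun n i j => ξ n i j ω) A (k * (A + l))) (hinv P X n)) /
          (n * truncMean P X (hinv P X n))) atTop
      fun _ => ((A + l : ℕ) : ℝ)⁻¹ * ((A * (N * 2) : ℕ) : ℝ) := by
  set M : ℕ → Ω → ℝ := fun k ω => blockMax (fun n i j => ξ n i j ω) A (k * (A + l))
  have M_tail (k : ℕ) : tail P (M k) = tail P (M 0) :=
    funext fun x => by simp only [M, hξ.tail_blockMax hN hA]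
  have hmean := (tendsto_truncMean_div_of_tail_eq hX hRV.tail_pos hm _
    (hξ.tail_blockMax hN hA (0 * (A + l)))).comp
    ((tendsto_hinv_atTop hX hRV.tail_pos).comp tendsto_natCast_atTop_atTop)
  have hcard : Tendsto (fun n : ℕ => ((Finset.range (n / (A + l))).card : ℝ) / n) atTop
      (nhds ((A + l : ℕ) : ℝ)⁻¹) := by
    simpa only [Finset.card_range] using tendsto_natCast_div_div_atTop (A + l)
  simpa only [one_mul] using tendstoInMeasure_sum_min_hinv_div (Z := M) (Y := M 0) (K := 1) hX hRV
    hm (fun k => .iSup fun _ => hξ.measurable _ _ _)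
    (fun k ω => Real.iSup_nonneg fun _ => hξ.nonneg _ _ _ _) M_tail
    (fun k k' => hξ.indepFun_blockMax (Nat.le_add_right A l)) zero_le_one (by positivity)
    (by positivity) hcard (by simpa only [one_mul, Function.comp_def] using hmean)

lemma exists_lt_inv_add_mul {b c : ℝ} (hb : b < c) (l : ℕ) :
    ∃ A : ℕ, 0 < A ∧ b < ((A + l : ℕ) : ℝ)⁻¹ * (A * c) := by
  have hlim := (tendsto_natCast_div_add_atTop (l : ℝ)).mul_const c
  rw [one_mul] at hlim
  obtain ⟨A, hbA, hA⟩ := ((hlim.eventually_const_lt hb).and (eventually_gt_atTop 0)).exists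
  exact ⟨A, hA, by rwa [Nat.cast_add, ← mul_assoc, ← div_eq_inv_mul]⟩

theorem tendstoInMeasure_div_of_brwMin_le_of_le_brwMax (hX : Measurable X)
    (hRV : TailRegularlyVarying P X 1) (hm : Tendsto (truncMean P X) atTop atTop)
    (hξ : IsJumpField P X ξ) (hN : 0 < N) {R : ℕ → Ω → ℝ}
    (hmin : ∀ n ω, brwMin N (fun n i j => ξ n i j ω) n ≤ R n ω)
    (hmax : ∀ n ω, R n ω ≤ brwMax N (fun n i j => ξ n i j ω) n) :
    TendstoInMeasure P (fun n ω => R n ω / (n * truncMean P X (hinv P X n))) atTop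
      fun _ => N * 2 := by
  have norm_nonneg : ∀ᶠ n : ℕ in atTop, 0 ≤ n * truncMean P X (hinv P X n) := by
    have ha := (tendsto_hinv_atTop hX hRV.tail_pos).comp tendsto_natCast_atTop_atTop
    filter_upwards [(hm.comp ha).eventually_ge_atTop 0] with n hn
      using mul_nonneg n.cast_nonneg hn
  refine tendstoInMeasure_const_of_forall_lt_of_le (fun b hb => ?_)
    (tendstoInMeasure_sum_jump_div hX hRV hm hξ hN) ?_
  · obtain ⟨A, hA, hbA⟩ := exists_lt_inv_add_mul hb N
    refine ⟨_, by exact_mod_cast hbA, _,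
      tendstoInMeasure_sum_min_blockMax_div hX hRV hm hξ hN hA N, ?_⟩
    filter_upwards [norm_nonneg] with n hn ω
    refine div_le_div_of_nonneg_right ?_ hn
    exact (Finset.sum_le_sum fun _ _ => min_le_left _ _).trans
      ((sum_blockMax_le_brwMin hN (fun _ _ _ => hξ.nonneg _ _ _ _) hA
        Nat.lt_two_pow_self.le n).trans (hmin n ω))
  · filter_upwards [norm_nonneg] with n hn ω
    exact div_le_div_of_nonneg_right ((hmax n ω).trans
      (brwMax_le_sum hN (fun _ _ _ => hξ.nonneg _ _ _ _) n)) hn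

end FixedPopulation

section LevyProkhorov

variable {E : Type*} [PseudoMetricSpace E] [TopologicalSpace.SeparableSpace E] [MeasurableSpace E]
  [BorelSpace E]

lemma continuous_levyProkhorovDist_left (ν : ProbabilityMeasure E) :
    Continuous fun μ : ProbabilityMeasure E => levyProkhorovDist (μ : Measure E) ν :=
  LevyProkhorov.continuous_ofMeasure_probabilityMeasure.dist continuous_const

lemma tendsto_levyProkhorovDist_map {Ω ι : Type*} [MeasurableSpace Ω] {P : Measure Ω}
    [IsProbabilityMeasure P] {l : Filter ι} [l.NeBot] [l.IsCountablyGenerated]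
    {f : ι → Ω → E} {c : E} (hf : ∀ i, AEMeasurable (f i) P)
    (h : TendstoInMeasure P f l fun _ => c) (ν : Measure E) [IsProbabilityMeasure ν] :
    Tendsto (fun i => levyProkhorovDist (P.map (f i)) ν) l
      (nhds (levyProkhorovDist (Measure.dirac c) ν)) := by
  have hlaw := (h.tendstoInDistribution hf).tendsto
  have hdist := ((continuous_levyProkhorovDist_left ⟨ν, ‹_›⟩).tendsto _).comp hlaw
  simp only [Measure.map_const, measure_univ, one_smul] at hdist
  exact hdist

lemma continuous_levyProkhorovDist_dirac (ν : Measure E) [IsProbabilityMeasure ν] :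
    Continuous fun c : E => levyProkhorovDist (Measure.dirac c) ν :=
  (continuous_levyProkhorovDist_left ⟨ν, ‹_›⟩).comp continuous_diracProba

end LevyProkhorov

section Normalization

variable {Ω : Type*} [MeasurableSpace Ω] {P : Measure Ω} [IsProbabilityMeasure P] {X : Ω → ℝ}

lemma tendstoInMeasure_mul_div_mul_bN {N : ℕ} (hX : Measurable X)
    (hRV : TailRegularlyVarying P X 1) (hm : Tendsto (truncMean P X) atTop atTop)
    (hc : 0 < cN P X N) {R : ℕ → Ω → ℝ} {r : ℝ}
    (hR : TendstoInMeasure P (fun n ω => R n ω / (n * truncMean P X (hinv P X n))) atTop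
      fun _ => r) (q : ℝ) :
    TendstoInMeasure P (fun n ω => q / cN P X N * (R n ω / (n * bN P X N n))) atTop
      fun _ => q * tail P X (cN P X N) * r := by
  have hratio := (((tendsto_truncMean_mul_hinv_sub_div hX hRV hm hc).comp
    tendsto_natCast_atTop_atTop).inv₀ one_ne_zero).const_mul (q * tail P X (cN P X N))
  rw [inv_one, mul_one] at hratio
  refine (tendstoInMeasure_mul_of_tendsto hR hratio).congr' ?_ .rfl
  have ha := (tendsto_hinv_atTop hX hRV.tail_pos).comp tendsto_natCast_atTop_atTop
  filter_upwards [(hm.comp ha).eventually_gt_atTop 0] with n hn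
  refine .of_forall fun ω => ?_
  simp only [Function.comp_apply] at hn ⊢
  rw [bN_eq_truncMean_sub_div hc.ne']
  field_simp

lemma tendsto_two_mul_natCast_mul_logb_atTop :
    Tendsto (fun N : ℕ => 2 * N * Real.logb 2 N) atTop atTop :=
  (tendsto_natCast_atTop_atTop.const_mul_atTop two_pos).atTop_mul_atTop₀
    ((Real.tendsto_logb_atTop one_lt_two).comp tendsto_natCast_atTop_atTop)

theorem tendsto_limsup_levyProkhorovDist_of_brwMin_le_of_le_brwMax (hX : Measurable X)
    (hRV : TailRegularlyVarying P X 1) (hm : Tendsto (truncMean P X) atTop atTop)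
    {ξ : (N : ℕ) → ℕ → Fin N → Fin 2 → Ω → ℝ} (hξ : ∀ N, IsJumpField P X (ξ N))
    {R : ℕ → ℕ → Ω → ℝ} (hR : ∀ N n, Measurable (R N n))
    (hmin : ∀ N n ω, brwMin N (fun k i j => ξ N k i j ω) n ≤ R N n ω)
    (hmax : ∀ N n ω, R N n ω ≤ brwMax N (fun k i j => ξ N k i j ω) n) :
    Tendsto (fun N : ℕ => limsup (fun n : ℕ => levyProkhorovDist
        (P.map fun ω => Real.logb 2 N / cN P X N * (R N n ω / (n * bN P X N n)))
        (Measure.dirac (1 : ℝ))) atTop) atTop (nhds 0) := by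
  have cN_tendsto : Tendsto (cN P X) atTop atTop :=
    (tendsto_hinv_atTop hX hRV.tail_pos).comp tendsto_two_mul_natCast_mul_logb_atTop
  have limit_tendsto : Tendsto
      (fun N : ℕ => Real.logb 2 N * tail P X (cN P X N) * (N * 2)) atTop (nhds 1) :=
    ((tendsto_mul_tail_hinv hX hRV).comp tendsto_two_mul_natCast_mul_logb_atTop).congr fun N => by
      rw [Function.comp_apply, cN]
      ring
  have dist_tendsto := ((continuous_levyProkhorovDist_dirac (Measure.dirac (1 : ℝ))).tendsto 1).comp
    limit_tendsto
  rw [levyProkhorovDist_self] at dist_tendsto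
  refine dist_tendsto.congr' ?_
  filter_upwards [cN_tendsto.eventually_gt_atTop 0, eventually_gt_atTop 0] with N hc hN
  have hweak := tendstoInMeasure_mul_div_mul_bN hX hRV hm hc
    (tendstoInMeasure_div_of_brwMin_le_of_le_brwMax hX hRV hm (hξ N) hN (hmin N) (hmax N))
    (Real.logb 2 N)
  exact (tendsto_levyProkhorovDist_map
    (fun n => (((hR N n).div_const _).const_mul _).aemeasurable) hweak _).limsup_eq.symm

end Normalization

/-- if `α = 1` and `E[X] = ∞`, then for `i ∈ {1, N}`,
`lim_{N→∞} limsup_{n→∞} d(L((log₂ N / c_N) X_i(n)/(n b^N_n)), δ₁) = 0` in the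
Lévy–Prokhorov distance. -/
theorem stmt_16 {Ω : Type*} [MeasurableSpace Ω] (P : Measure Ω) [IsProbabilityMeasure P]
    (X : Ω → ℝ) (hXmeas : Measurable X) (hXpos : ∀ ω, 0 ≤ X ω)
    (hXnotint : ¬ Integrable X P)
    (hRV : ∀ l : ℝ, 0 < l →
      Tendsto (fun x => tail P X x / tail P X (l * x)) atTop (nhds (l ^ (1 : ℝ))))
    (ξ : (N : ℕ) → ℕ → Fin N → Fin 2 → Ω → ℝ)
    (hξmeas : ∀ N n i j, Measurable (ξ N n i j))
    (hξpos : ∀ N n i j ω, 0 ≤ ξ N n i j ω)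
    (hξdist : ∀ N n i j, Measure.map (ξ N n i j) P = Measure.map X P)
    (hξindep : ∀ N, iIndepFun
      (fun p : ℕ × Fin N × Fin 2 => ξ N p.1 p.2.1 p.2.2) P) :
    Tendsto (fun N : ℕ => Filter.limsup (fun n : ℕ =>
        levyProkhorovDist
          (Measure.map (fun ω =>
            (Real.logb 2 N / cN P X N) *
              (brwMax N (fun k i j => ξ N k i j ω) n / (n * bN P X N n))) P)
          (Measure.dirac (1 : ℝ))) atTop)
      atTop (nhds 0) ∧
    Tendsto (fun N : ℕ => Filter.limsup (fun n : ℕ =>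
        levyProkhorovDist
          (Measure.map (fun ω =>
            (Real.logb 2 N / cN P X N) *
              (brwMin N (fun k i j => ξ N k i j ω) n / (n * bN P X N n))) P)
          (Measure.dirac (1 : ℝ))) atTop)
      atTop (nhds 0) := by
  have hm := tendsto_truncMean_atTop hXmeas hXpos hXnotint
  have hξ (N : ℕ) : IsJumpField P X (ξ N) :=
    { measurable := hξmeas N
      nonneg := hξpos N
      tail_eq := fun n i j => tail_congr_of_map_eq hXmeas (hξmeas N n i j) (hξdist N n i j)
      iIndepFun := hξindep N }
  constructor
  · exact tendsto_limsup_levyProkhorovDist_of_brwMin_le_of_le_brwMax hXmeas hRV hm hξ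
      (fun N n => (hξ N).measurable_comp (measurable_brwMax n))
      (fun N n ω => brwMin_le_brwMax n) fun N n ω => le_rfl
  · exact tendsto_limsup_levyProkhorovDist_of_brwMin_le_of_le_brwMax hXmeas hRV hm hξ
      (fun N n => (hξ N).measurable_comp (measurable_brwMin n))
      (fun N n ω => le_rfl) fun N n ω => brwMin_le_brwMax n

end
end
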